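/- Let −2 < η1 < 2 and h > 0. Set β = √(4 − η1²) and let z₊ be the complex square root with positive real part of (η1 − i·β)/2. Then ∫₀^∞ u·J₀(u·h)/(1 + η1·u² + u⁴) du = (2/β)·Im(K₀(h·z₊)), where K₀(w) = ∫₀^∞ exp(−w cosh t) dt for complex w with Re w > 0. Consequently the two-dimensional Spartan covariance C(h) = (η0/2π)·∫₀^∞ u·J₀(u·h)/(1 + η1·u² + u⁴) du equals η0·Im(K₀(h·z₊))/(π·√(4 − η1²)) for every amplitude η0 > 0. -/

import Mathlib

open MeasureTheory Real

/-- Bessel function of the first kind of order zero,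
`J₀(x) = (1/π) ∫₀^π cos (x sin θ) dθ`. -/
noncomputable def besselJ0 (x : ℝ) : ℝ :=
  (1 / Real.pi) * ∫ θ in (0:ℝ)..Real.pi, Real.cos (x * Real.sin θ)

/-- Modified Bessel function of the second kind of order zero of a complex
argument with `Re w > 0`, `K₀(w) = ∫₀^∞ exp (−w cosh t) dt`. -/
noncomputable def besselK0C (w : ℂ) : ℂ :=
  ∫ t in Set.Ioi (0:ℝ), Complex.exp (-w * (Real.cosh t : ℂ))

/-!
The substance is `∫₀^∞ u J₀(uh) Im (u² + z²)⁻¹ du = Im K₀(hz)` for `Re z > 0`; the theorem is the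
case `z² = (η₁ - iβ) / 2`, for then `Im (u² + z²)⁻¹ = (β / 2) / Π(u)`.

Since `(u² + |z|²)⁻¹` is real, it may be subtracted from `(u² + z²)⁻¹` under `Im`. The difference is
an integral over `s > 0` of Gaussians `exp (-(s / z) u²)`. This rotation of the usual Laplace
representation keeps every Gaussian decaying, even when `z²` has negative real part, and the
subtraction makes the double integral absolutely convergent. After Fubini, the integral over `u` is
the Hankel transform of a Gaussian, obtained from the Fourier transform of a Gaussian on the plane
in polar coordinates. With `s = (h / 2) eᵗ`, the first term becomes
`∫ exp (-h z cosh t) dt / 2 = K₀(hz)`, with `t` ranging over `ℝ`, and the subtracted one is real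
because `t ↦ -t` conjugates its integrand.
-/

section

open Set
open scoped Complex ComplexConjugate

theorem continuous_besselJ0 : Continuous besselJ0 := by
  unfold besselJ0
  exact continuous_const.mul <|
    intervalIntegral.continuous_parametric_intervalIntegral_of_continuous'
      (by simp only [Function.uncurry_def]; fun_prop) _ _

theorem abs_besselJ0_le_one (x : ℝ) : |besselJ0 x| ≤ 1 := by
  have hbound := intervalIntegral.norm_integral_le_of_norm_le_const (a := 0) (b := π) (C := 1)
    (f := fun θ ↦ Real.cos (x * Real.sin θ)) (fun θ _ ↦ Real.abs_cos_le_one _)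
  rw [norm_eq_abs, sub_zero, one_mul, abs_of_pos pi_pos] at hbound
  rwa [besselJ0, abs_mul, abs_of_pos (by positivity), one_div, inv_mul_le_iff₀ pi_pos, mul_one]

theorem integral_cexp_mul_sin_mul_I (x : ℝ) :
    ∫ θ in Ioo (-π) π, cexp ((x * Real.sin θ : ℝ) * Complex.I) = 2 * π * besselJ0 x := by
  have hint (a b : ℝ) : IntervalIntegrable
      (fun θ : ℝ ↦ cexp ((x * Real.sin θ : ℝ) * Complex.I)) volume a b :=
    Continuous.intervalIntegrable (by fun_prop) a b
  have hreflect : ∫ θ in (-π)..0, cexp ((x * Real.sin θ : ℝ) * Complex.I)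
      = ∫ θ in 0..π, cexp ((x * Real.sin (-θ) : ℝ) * Complex.I) := by
    rw [intervalIntegral.integral_comp_neg fun θ : ℝ ↦ cexp ((x * Real.sin θ : ℝ) * Complex.I),
      neg_zero]
  have htwo_cos (θ : ℝ) : cexp ((x * Real.sin (-θ) : ℝ) * Complex.I)
      + cexp ((x * Real.sin θ : ℝ) * Complex.I) = 2 * (Real.cos (x * Real.sin θ) : ℝ) := by
    rw [Complex.ofReal_cos, Complex.two_cos, add_comm]
    simp
  rw [← integral_Ioc_eq_integral_Ioo, ← intervalIntegral.integral_of_le (by linarith [pi_pos]),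
    ← intervalIntegral.integral_add_adjacent_intervals (hint _ 0) (hint _ _), hreflect,
    ← intervalIntegral.integral_add (Continuous.intervalIntegrable (by fun_prop) _ _) (hint _ _)]
  simp only [htwo_cos]
  rw [intervalIntegral.integral_const_mul, intervalIntegral.integral_ofReal, besselJ0]
  push_cast
  field_simp

theorem integral_mul_besselJ0_mul_cexp_neg_mul_sq {b : ℂ} (hb : 0 < b.re) (h : ℝ) :
    ∫ u in Ioi (0 : ℝ), u * cexp (-b * u ^ 2) * besselJ0 (u * h)
      = cexp (-h ^ 2 / (4 * b)) / (2 * b) := by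
  have hb0 : b ≠ 0 := by rintro rfl; simp at hb
  have hplane : ∫ v : ℂ, cexp (-b * ‖v‖ ^ 2 + Complex.I * h * (v.im : ℝ))
      = π / b * cexp (-h ^ 2 / (4 * b)) := by
    simpa [Complex.inner, mul_pow] using
      GaussianFourier.integral_cexp_neg_mul_sq_norm_add hb (Complex.I * h) Complex.I
  have hpolar (p : ℝ × ℝ) : p.1 • cexp (-b * ‖Complex.polarCoord.symm p‖ ^ 2
        + Complex.I * h * ((Complex.polarCoord.symm p).im : ℝ))
      = p.1 * cexp (-b * p.1 ^ 2) * cexp ((p.1 * h * Real.sin p.2 : ℝ) * Complex.I) := by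
    have him : (Complex.polarCoord.symm p).im = p.1 * Real.sin p.2 := by
      simp [-Complex.ofReal_sin, -Complex.ofReal_cos]
    have hnorm : (‖Complex.polarCoord.symm p‖ : ℂ) ^ 2 = p.1 ^ 2 := by
      rw [Complex.norm_polarCoord_symm, ← Complex.ofReal_pow, sq_abs, Complex.ofReal_pow]
    rw [him, hnorm, Complex.exp_add, Complex.real_smul, mul_assoc]
    push_cast
    ring_nf
  have hint : IntegrableOn (fun p : ℝ × ℝ ↦
      p.1 * cexp (-b * p.1 ^ 2) * cexp ((p.1 * h * Real.sin p.2 : ℝ) * Complex.I))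
      (Ioi 0 ×ˢ Ioo (-π) π) (volume.prod volume) := by
    rw [IntegrableOn, ← Measure.prod_restrict]
    refine ((integrable_mul_cexp_neg_mul_sq hb).integrableOn.mul_prod
      (integrable_const (1 : ℂ))).mono (by fun_prop) (.of_forall fun p ↦ ?_)
    rw [norm_mul, Complex.norm_exp_ofReal_mul_I, mul_one, mul_one]
  rw [← Complex.integral_comp_polarCoord_symm] at hplane
  simp only [hpolar] at hplane
  rw [polarCoord_target, Measure.volume_eq_prod, setIntegral_prod _ hint] at hplane
  simp only [integral_const_mul, integral_cexp_mul_sin_mul_I, mul_left_comm _ (2 * π : ℂ)] at hplane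
  refine mul_left_cancel₀ (by simp [pi_ne_zero] : (2 * π : ℂ) ≠ 0) (hplane.trans ?_)
  field_simp

theorem integral_Ioi_inv_smul_eq_integral_comp_mul_exp {E : Type*} [NormedAddCommGroup E]
    [NormedSpace ℝ E] {c : ℝ} (hc : 0 < c) (g : ℝ → E) :
    ∫ s in Ioi (0 : ℝ), s⁻¹ • g s = ∫ t, g (c * rexp t) := by
  have hrange : (fun t ↦ c * rexp t) '' univ = Ioi 0 := by
    rw [← image_image (c * ·) rexp, image_univ, range_exp, image_mul_left_Ioi hc, mul_zero]
  have hsubst := integral_image_eq_integral_abs_deriv_smul MeasurableSet.univ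
    (fun t _ ↦ ((Real.hasDerivAt_exp t).const_mul c).hasDerivWithinAt)
    (fun _ _ _ _ heq ↦ exp_injective (mul_left_cancel₀ hc.ne' heq)) (fun s ↦ s⁻¹ • g s)
  rw [hrange, setIntegral_univ] at hsubst
  refine hsubst.trans (integral_congr_ae (.of_forall fun t ↦ ?_))
  have ht : 0 < c * rexp t := by positivity
  simp only [abs_of_pos ht, smul_smul, mul_inv_cancel₀ ht.ne', one_smul]

theorem one_add_sq_div_two_le_cosh (t : ℝ) : 1 + t ^ 2 / 2 ≤ cosh t := by
  have hsinh : |t| / 2 ≤ sinh (|t| / 2) := self_le_sinh_iff.2 (by positivity)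
  calc 1 + t ^ 2 / 2 = 1 + 2 * (|t| / 2) ^ 2 := by rw [div_pow, sq_abs]; ring
    _ ≤ 1 + 2 * sinh (|t| / 2) ^ 2 := by gcongr
    _ = cosh (2 * (|t| / 2)) := by rw [cosh_two_mul, cosh_sq]; ring
    _ = cosh t := by rw [mul_div_cancel₀ _ two_ne_zero, cosh_abs]

theorem integrable_cexp_neg_mul_exp_add_mul_exp_neg {a b : ℂ} (ha : 0 < a.re) (hb : 0 < b.re) :
    Integrable fun t : ℝ ↦ cexp (-(a * rexp t + b * rexp (-t))) := by
  set m := min a.re b.re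
  have hm : 0 < m := lt_min ha hb
  refine (integrable_inv_one_add_sq.const_mul m⁻¹).mono' (by fun_prop) (.of_forall fun t ↦ ?_)
  have hgrowth : 1 + t ^ 2 ≤ rexp t + rexp (-t) := by
    linarith [one_add_sq_div_two_le_cosh t, cosh_eq t]
  have hlower : m * (1 + t ^ 2) ≤ a.re * rexp t + b.re * rexp (-t) := calc
    m * (1 + t ^ 2) ≤ m * (rexp t + rexp (-t)) := by gcongr
    _ = m * rexp t + m * rexp (-t) := mul_add _ _ _
    _ ≤ a.re * rexp t + b.re * rexp (-t) := by
      gcongr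
      exacts [min_le_left _ _, min_le_right _ _]
  calc ‖cexp (-(a * rexp t + b * rexp (-t)))‖
      = (rexp (a.re * rexp t + b.re * rexp (-t)))⁻¹ := by
        rw [Complex.norm_exp, Complex.neg_re, Complex.add_re, Complex.re_mul_ofReal,
          Complex.re_mul_ofReal, Real.exp_neg]
    _ ≤ (m * (1 + t ^ 2))⁻¹ := by
        gcongr
        linarith [Real.add_one_le_exp (a.re * rexp t + b.re * rexp (-t))]
    _ = m⁻¹ * (1 + t ^ 2)⁻¹ := mul_inv _ _

theorem integral_cexp_neg_mul_exp_add_mul_exp_neg_self {w : ℂ} (hw : 0 < w.re) :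
    ∫ t : ℝ, cexp (-(w * rexp t + w * rexp (-t))) = 2 * besselK0C (2 * w) := by
  have hint := integrable_cexp_neg_mul_exp_add_mul_exp_neg hw hw
  have hleft : ∫ t in Iic (0 : ℝ), cexp (-(w * rexp t + w * rexp (-t)))
      = ∫ t in Ioi (0 : ℝ), cexp (-(w * rexp t + w * rexp (-t))) := by
    rw [← neg_zero, ← integral_comp_neg_Ioi, neg_zero]
    simp only [neg_neg, add_comm]
  have hcosh (t : ℝ) : cexp (-(w * rexp t + w * rexp (-t))) = cexp (-(2 * w) * Real.cosh t) := by
    rw [cosh_eq]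
    push_cast
    ring_nf
  rw [← intervalIntegral.integral_Iic_add_Ioi hint.integrableOn hint.integrableOn, hleft, ← two_mul,
    besselK0C]
  simp only [hcosh]

theorem im_integral_cexp_neg_conj_mul_exp_add_mul_exp_neg (w : ℂ) :
    (∫ t : ℝ, cexp (-(conj w * rexp t + w * rexp (-t)))).im = 0 := by
  rw [← Complex.conj_eq_iff_im, ← integral_conj, ← integral_neg_eq_self]
  congr! 2
  simp only [← Complex.exp_conj, map_neg, map_add, map_mul, Complex.conj_conj, Complex.conj_ofReal,
    neg_neg, add_comm]

/-- The kernel whose integral over `s > 0` is `(u² + z²)⁻¹ - (u² + |z|²)⁻¹`: a superposition of the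
Gaussians `exp (-(s / z) u²)`. The second summand, whose integral is real, makes
the kernel `O(s)` at `s = 0`, hence absolutely integrable against `u du ds`. -/
noncomputable def resolventKernel (z : ℂ) (u s : ℝ) : ℂ :=
  cexp (-(s / z) * u ^ 2) * ((cexp (-z * s) - cexp (-conj z * s)) / z)

theorem re_ofReal_div_pos {z : ℂ} (hz : 0 < z.re) {s : ℝ} (hs : 0 < s) : 0 < (s / z : ℂ).re := by
  have hz0 : z ≠ 0 := by rintro rfl; simp at hz
  have := Complex.normSq_pos.2 hz0
  simp only [Complex.div_re, Complex.ofReal_re, Complex.ofReal_im, zero_mul, zero_div, add_zero]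
  positivity

theorem integral_resolventKernel {z : ℂ} (hz : 0 < z.re) (u : ℝ) :
    ∫ s in Ioi (0 : ℝ), resolventKernel z u s
      = ((u : ℂ) ^ 2 + z ^ 2)⁻¹ - ((u : ℂ) ^ 2 + (‖z‖ : ℂ) ^ 2)⁻¹ := by
  have hz0 : z ≠ 0 := by rintro rfl; simp at hz
  have hlaplace {w : ℂ} (hw : 0 < w.re) :
      IntegrableOn (fun s : ℝ ↦ cexp (-(u ^ 2 / z + w) * s)) (Ioi 0) ∧
        ∫ s in Ioi (0 : ℝ), cexp (-(u ^ 2 / z + w) * s) = z * ((u : ℂ) ^ 2 + w * z)⁻¹ := by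
    have hre : (-(u ^ 2 / z + w)).re < 0 := by
      have := Complex.normSq_pos.2 hz0
      simp only [Complex.neg_re, Complex.add_re, ← Complex.ofReal_pow, Complex.div_re,
        Complex.ofReal_re, Complex.ofReal_im, zero_mul, zero_div, add_zero, neg_lt_zero]
      positivity
    refine ⟨integrableOn_exp_mul_complex_Ioi hre 0, ?_⟩
    rw [integral_exp_mul_complex_Ioi hre, Complex.ofReal_zero, mul_zero, Complex.exp_zero,
      neg_div_neg_eq, div_add' _ _ _ hz0, one_div_div, div_eq_mul_inv]
  have hsplit (s : ℝ) : resolventKernel z u s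
      = z⁻¹ * (cexp (-(u ^ 2 / z + z) * s) - cexp (-(u ^ 2 / z + conj z) * s)) := by
    have hexp (w : ℂ) : cexp (-(u ^ 2 / z + w) * s) = cexp (-(s / z) * u ^ 2) * cexp (-w * s) := by
      rw [← Complex.exp_add]
      ring_nf
    rw [resolventKernel, hexp, hexp]
    ring
  obtain ⟨hint, hval⟩ := hlaplace hz
  obtain ⟨hint', hval'⟩ := hlaplace (w := conj z) (by rwa [Complex.conj_re])
  simp only [hsplit]
  rw [integral_const_mul, integral_sub hint hint', hval, hval', Complex.conj_mul', ← mul_sub,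
    inv_mul_cancel_left₀ hz0, ← sq]

theorem norm_resolventKernel_le (z : ℂ) (u : ℝ) {s : ℝ} (hs : 0 ≤ s) :
    ‖resolventKernel z u s‖ ≤
      rexp (-(z⁻¹.re * s) * u ^ 2) * (s * rexp (-(z.re * s))) * (2 * |z.im| / ‖z‖) := by
  have hgauss : ‖cexp (-(s / z) * u ^ 2)‖ = rexp (-(z⁻¹.re * s) * u ^ 2) := by
    rw [Complex.norm_exp, ← Complex.ofReal_pow, Complex.re_mul_ofReal, Complex.neg_re,
      div_eq_mul_inv, Complex.re_ofReal_mul, mul_comm s]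
  have hdiff : ‖cexp (-z * s) - cexp (-conj z * s)‖ ≤ rexp (-(z.re * s)) * (2 * |z.im| * s) := by
    have hfactor : cexp (-z * s) - cexp (-conj z * s)
        = -(cexp (-z * s) * (cexp (Complex.I * (2 * z.im * s : ℝ)) - 1)) := by
      have hconj : -conj z * s = -z * s + Complex.I * (2 * z.im * s : ℝ) := by
        apply Complex.ext
        · simp
        · simp
          ring
      rw [hconj, Complex.exp_add]
      ring
    rw [hfactor, norm_neg, norm_mul, Complex.norm_exp, Complex.re_mul_ofReal, Complex.neg_re,
      neg_mul]
    gcongr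
    refine Real.norm_exp_I_mul_ofReal_sub_one_le.trans_eq ?_
    rw [norm_mul, norm_mul, norm_eq_abs, norm_eq_abs, norm_eq_abs, abs_two, abs_of_nonneg hs]
  calc ‖resolventKernel z u s‖
      ≤ rexp (-(z⁻¹.re * s) * u ^ 2) * (rexp (-(z.re * s)) * (2 * |z.im| * s) / ‖z‖) := by
        rw [resolventKernel, norm_mul, norm_div, hgauss]
        gcongr
    _ = _ := by ring

theorem integrable_mul_exp_neg_mul_sq_mul_exp_neg_mul {a c : ℝ} (ha : 0 < a) (hc : 0 < c) :
    Integrable (fun p : ℝ × ℝ ↦ p.1 * (rexp (-(c * p.2) * p.1 ^ 2) * (p.2 * rexp (-(a * p.2)))))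
      ((volume.restrict (Ioi 0)).prod (volume.restrict (Ioi 0))) := by
  have hinner {s : ℝ} (hs : 0 < s) :
      ∫ u in Ioi (0 : ℝ), ‖u * (rexp (-(c * s) * u ^ 2) * (s * rexp (-(a * s))))‖
        = (2 * c)⁻¹ * rexp (-a * s) := by
    have hgauss : ∫ u in Ioi (0 : ℝ), u * rexp (-(c * s) * u ^ 2) = (2 * (c * s))⁻¹ := by
      have := integral_mul_cexp_neg_mul_sq (b := (c * s : ℝ)) (by simpa using mul_pos hc hs)
      exact_mod_cast this
    calc ∫ u in Ioi (0 : ℝ), ‖u * (rexp (-(c * s) * u ^ 2) * (s * rexp (-(a * s))))‖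
        = ∫ u in Ioi (0 : ℝ), u * rexp (-(c * s) * u ^ 2) * (s * rexp (-(a * s))) :=
          setIntegral_congr_fun measurableSet_Ioi fun u (hu : 0 < u) ↦ by
            rw [norm_of_nonneg (by positivity), mul_assoc]
      _ = (2 * c)⁻¹ * rexp (-a * s) := by
          rw [integral_mul_const, hgauss, ← neg_mul]
          field_simp
  rw [integrable_prod_iff' (by fun_prop)]
  constructor
  · filter_upwards [ae_restrict_mem measurableSet_Ioi] with s (hs : 0 < s)
    simpa only [mul_assoc] using ((integrable_mul_exp_neg_mul_sq (mul_pos hc hs)).restrict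
      (s := Ioi 0)).mul_const (s * rexp (-(a * s)))
  · refine (((integrableOn_exp_mul_Ioi (neg_lt_zero.2 ha) 0).const_mul (2 * c)⁻¹).congr ?_)
    filter_upwards [ae_restrict_mem measurableSet_Ioi] with s hs using (hinner hs).symm

theorem integrable_mul_besselJ0_mul_resolventKernel (h : ℝ) {z : ℂ} (hz : 0 < z.re) :
    Integrable (fun p : ℝ × ℝ ↦ (p.1 * besselJ0 (p.1 * h) : ℝ) * resolventKernel z p.1 p.2)
      ((volume.restrict (Ioi 0)).prod (volume.restrict (Ioi 0))) := by
  have hJ := continuous_besselJ0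
  have hzinv : 0 < z⁻¹.re := by simpa using re_ofReal_div_pos hz one_pos
  refine ((integrable_mul_exp_neg_mul_sq_mul_exp_neg_mul hz hzinv).mul_const
    (2 * |z.im| / ‖z‖)).mono' (by unfold resolventKernel; fun_prop) ?_
  rw [Measure.prod_restrict]
  filter_upwards [ae_restrict_mem (measurableSet_Ioi.prod measurableSet_Ioi)]
    with ⟨u, s⟩ ⟨(hu : 0 < u), (hs : 0 < s)⟩
  have hJu : ‖((u * besselJ0 (u * h) : ℝ) : ℂ)‖ ≤ u := by
    rw [Complex.norm_real, norm_mul, norm_of_nonneg hu.le]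
    exact mul_le_of_le_one_right hu.le (abs_besselJ0_le_one _)
  calc ‖((u * besselJ0 (u * h) : ℝ) : ℂ) * resolventKernel z u s‖
      ≤ u * (rexp (-(z⁻¹.re * s) * u ^ 2) * (s * rexp (-(z.re * s))) * (2 * |z.im| / ‖z‖)) := by
        rw [norm_mul]
        gcongr
        exact norm_resolventKernel_le z u hs.le
    _ = _ := (mul_assoc _ _ _).symm

theorem integral_mul_besselJ0_mul_resolventKernel (h : ℝ) {z : ℂ} (hz : 0 < z.re) {s : ℝ}
    (hs : 0 < s) :
    ∫ u in Ioi (0 : ℝ), (u * besselJ0 (u * h) : ℝ) * resolventKernel z u s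
      = s⁻¹ • ((cexp (-z * s - h ^ 2 * z / (4 * s)) - cexp (-conj z * s - h ^ 2 * z / (4 * s)))
        / 2) := by
  have hz0 : z ≠ 0 := by rintro rfl; simp at hz
  have hs0 : (s : ℂ) ≠ 0 := mod_cast hs.ne'
  have hexp : cexp (-h ^ 2 / (4 * (s / z))) = cexp (-(h ^ 2 * z / (4 * s))) := by
    congr 1
    field_simp
  calc ∫ u in Ioi (0 : ℝ), (u * besselJ0 (u * h) : ℝ) * resolventKernel z u s
      = (∫ u in Ioi (0 : ℝ), u * cexp (-(s / z) * u ^ 2) * besselJ0 (u * h))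
          * ((cexp (-z * s) - cexp (-conj z * s)) / z) := by
        rw [← integral_mul_const]
        congr! 2
        rw [resolventKernel]
        push_cast
        ring
    _ = _ := by
        rw [integral_mul_besselJ0_mul_cexp_neg_mul_sq (re_ofReal_div_pos hz hs), hexp,
          Complex.real_smul, sub_eq_add_neg _ (_ / _), sub_eq_add_neg _ (_ / _), Complex.exp_add,
          Complex.exp_add]
        push_cast
        field_simp

theorem im_integral_mul_besselJ0_mul_resolventKernel {h : ℝ} (hh : 0 < h) {z : ℂ}
    (hz : 0 < z.re) :
    (∫ s in Ioi (0 : ℝ), ∫ u in Ioi (0 : ℝ),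
      (u * besselJ0 (u * h) : ℝ) * resolventKernel z u s).im = (besselK0C (h * z)).im := by
  set w := h / 2 * z with hw_def
  have hw : 0 < w.re := by
    rw [hw_def, ← Complex.ofReal_ofNat, ← Complex.ofReal_div, Complex.re_ofReal_mul]
    positivity
  have hconj : conj w = h / 2 * conj z := by
    rw [hw_def, map_mul, map_div₀, Complex.conj_ofReal, map_ofNat]
  have hdouble : 2 * w = h * z := by
    rw [hw_def]
    ring
  have hsubst (a : ℂ) (t : ℝ) : -a * (h / 2 * rexp t : ℝ) - h ^ 2 * z / (4 * (h / 2 * rexp t : ℝ))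
      = -(h / 2 * a * rexp t + w * rexp (-t)) := by
    have hh0 : (h : ℂ) ≠ 0 := mod_cast hh.ne'
    rw [hw_def, Real.exp_neg]
    push_cast
    field_simp
    ring
  calc (∫ s in Ioi (0 : ℝ), ∫ u in Ioi (0 : ℝ),
        (u * besselJ0 (u * h) : ℝ) * resolventKernel z u s).im
      = (∫ t : ℝ, (cexp (-(w * rexp t + w * rexp (-t)))
          - cexp (-(conj w * rexp t + w * rexp (-t)))) / 2).im := by
        rw [setIntegral_congr_fun measurableSet_Ioi fun s hs ↦
          integral_mul_besselJ0_mul_resolventKernel h hz hs,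
          integral_Ioi_inv_smul_eq_integral_comp_mul_exp (half_pos hh)]
        simp only [hsubst, ← hconj, ← hw_def]
    _ = (besselK0C (h * z)).im := by
        rw [integral_div, integral_sub (integrable_cexp_neg_mul_exp_add_mul_exp_neg hw hw)
          (integrable_cexp_neg_mul_exp_add_mul_exp_neg (by rwa [Complex.conj_re]) hw),
          integral_cexp_neg_mul_exp_add_mul_exp_neg_self hw, Complex.div_ofNat_im, Complex.sub_im,
          im_integral_cexp_neg_conj_mul_exp_add_mul_exp_neg, sub_zero, hdouble, two_mul,
          Complex.add_im, add_self_div_two]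

theorem integral_mul_besselJ0_mul_im_inv_sq_add_sq {h : ℝ} (hh : 0 < h) {z : ℂ} (hz : 0 < z.re) :
    ∫ u in Ioi (0 : ℝ), u * besselJ0 (u * h) * (((u : ℂ) ^ 2 + z ^ 2)⁻¹).im
      = (besselK0C (h * z)).im := by
  have hint := integrable_mul_besselJ0_mul_resolventKernel h hz
  have him (u : ℝ) : u * besselJ0 (u * h) * (((u : ℂ) ^ 2 + z ^ 2)⁻¹).im
      = (∫ s in Ioi (0 : ℝ), (u * besselJ0 (u * h) : ℝ) * resolventKernel z u s).im := by
    have hreal : (((u : ℂ) ^ 2 + (‖z‖ : ℂ) ^ 2)⁻¹).im = 0 := by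
      rw [← Complex.ofReal_pow, ← Complex.ofReal_pow, ← Complex.ofReal_add, ← Complex.ofReal_inv,
        Complex.ofReal_im]
    rw [integral_const_mul, integral_resolventKernel hz, Complex.im_ofReal_mul, Complex.sub_im,
      hreal, sub_zero]
  simp only [him]
  rw [← im_integral_mul_besselJ0_mul_resolventKernel hh hz, ← integral_integral_swap hint]
  exact integral_im hint.integral_prod_left

theorem im_inv_sq_add_sq {η β : ℝ} (hβ : β ^ 2 = 4 - η ^ 2) {z : ℂ}
    (hz : z ^ 2 = (η - Complex.I * β) / 2) (u : ℝ) :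
    (((u : ℂ) ^ 2 + z ^ 2)⁻¹).im = β / 2 / (1 + η * u ^ 2 + u ^ 4) := by
  have hcoord : (u : ℂ) ^ 2 + z ^ 2 = ⟨u ^ 2 + η / 2, -(β / 2)⟩ := by
    rw [hz]
    apply Complex.ext <;> simp [← Complex.ofReal_pow, neg_div]
  have hnormSq : Complex.normSq ⟨u ^ 2 + η / 2, -(β / 2)⟩ = 1 + η * u ^ 2 + u ^ 4 := by
    rw [Complex.normSq_mk]
    linear_combination hβ / 4
  rw [hcoord, Complex.inv_im, hnormSq, neg_neg]

end

/-- Two-dimensional Spartan covariance, case `|η₁| < 2`. -/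
theorem spartan_covariance_abs_eta1_lt_two (η1 h β : ℝ)
    (hη1 : -2 < η1) (hη2 : η1 < 2) (hh : 0 < h)
    (hβ : β = Real.sqrt (4 - η1 ^ 2))
    (zp : ℂ) (hzp : zp ^ 2 = ((η1 : ℂ) - Complex.I * (β : ℂ)) / 2)
    (hre : 0 < zp.re) :
    (∫ u in Set.Ioi (0:ℝ), u * besselJ0 (u * h) / (1 + η1 * u ^ 2 + u ^ 4))
      = (2 / β) * (besselK0C ((h : ℂ) * zp)).im ∧
    ∀ η0 : ℝ, 0 < η0 →
      (η0 / (2 * Real.pi)) *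
          (∫ u in Set.Ioi (0:ℝ), u * besselJ0 (u * h) / (1 + η1 * u ^ 2 + u ^ 4))
        = η0 * (besselK0C ((h : ℂ) * zp)).im / (Real.pi * Real.sqrt (4 - η1 ^ 2)) := by
  have hpos : 0 < 4 - η1 ^ 2 := by nlinarith
  have hβpos : 0 < β := hβ ▸ Real.sqrt_pos.2 hpos
  have hβsq : β ^ 2 = 4 - η1 ^ 2 := hβ ▸ Real.sq_sqrt hpos.le
  have hmain : (∫ u in Set.Ioi (0:ℝ), u * besselJ0 (u * h) / (1 + η1 * u ^ 2 + u ^ 4))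
      = (2 / β) * (besselK0C ((h : ℂ) * zp)).im := by
    rw [← integral_mul_besselJ0_mul_im_inv_sq_add_sq hh hre, ← integral_const_mul]
    congr with u
    rw [im_inv_sq_add_sq hβsq hzp]
    field_simp
  refine ⟨hmain, fun η0 _ ↦ ?_⟩
  rw [hmain, ← hβ]
  field_simp
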